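/- arXiv:1303.0417 — 3 statements merged into one kernel-verified Lean document; each statement's English description precedes it below -/
import Mathlib

section
/- If 1 ≤ p ≤ 2, then Φ has a unique global minimizer x* ∈ ℝ^d; that is, there exists a unique x* such that Φ(x*) ≤ Φ(x) for all x ∈ ℝ^d. -/
open scoped ContDiff RealInnerProductSpace
open Filter

/-!
Since `√(‖x‖² + ε)` is the norm of `(x, √ε)` in the `L²` product `E × ℝ`, and two distinct points at
the same height `√ε > 0` never lie on a common ray, strict convexity of the `L²` norm makes
`x ↦ √(‖x‖² + ε)` strictly convex. This survives composition with the convex increasing map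
`t ↦ t ^ p`, translation and positive combinations, which gives uniqueness of the minimizer.
For existence, projecting onto the span of the centres decreases every distance to them, so it
suffices to minimize over this finite-dimensional subspace, where coercivity applies.
-/

section StrictConvexity

variable {E : Type*} [AddCommGroup E] [Module ℝ E] {s : Set E}

theorem strictConvexOn_const_mul {f : E → ℝ} {c : ℝ} (hc : 0 < c) (hf : StrictConvexOn ℝ s f) :
    StrictConvexOn ℝ s fun x => c * f x := by
  refine ⟨hf.1, fun x hx y hy hxy α β hα hβ hαβ => ?_⟩
  calc c * f (α • x + β • y) < c * (α • f x + β • f y) := by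
        gcongr
        exact hf.2 hx hy hxy hα hβ hαβ
    _ = α • (c * f x) + β • (c * f y) := by
        simp only [smul_eq_mul]
        ring

theorem strictConvexOn_sum {ι : Type*} {t : Finset ι} (ht : t.Nonempty) {f : ι → E → ℝ}
    (hf : ∀ j ∈ t, StrictConvexOn ℝ s (f j)) : StrictConvexOn ℝ s (∑ j ∈ t, f j) :=
  Finset.sum_induction_nonempty f (StrictConvexOn ℝ s) (fun _ _ => StrictConvexOn.add) ht hf

theorem strictConvexOn_rpow_comp {f : E → ℝ} {p : ℝ} (hp : 1 ≤ p) (hf : StrictConvexOn ℝ s f)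
    (hf₀ : ∀ x ∈ s, 0 ≤ f x) : StrictConvexOn ℝ s fun x => f x ^ p := by
  refine ⟨hf.1, fun x hx y hy hxy α β hα hβ hαβ => ?_⟩
  calc f (α • x + β • y) ^ p < (α • f x + β • f y) ^ p :=
        Real.rpow_lt_rpow (hf₀ _ (hf.1 hx hy hα.le hβ.le hαβ)) (hf.2 hx hy hxy hα hβ hαβ)
          (zero_lt_one.trans_le hp)
    _ ≤ α • f x ^ p + β • f y ^ p :=
        (convexOn_rpow hp).2 (hf₀ x hx) (hf₀ y hy) hα.le hβ.le hαβ

end StrictConvexity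

section SmoothedNorm

theorem sqrt_norm_sq_add_eq_norm_toLp {E : Type*} [NormedAddCommGroup E] {ε : ℝ} (hε : 0 ≤ ε)
    (x : E) : √(‖x‖ ^ 2 + ε) = ‖WithLp.toLp 2 (x, √ε)‖ := by
  simp [WithLp.prod_norm_eq_of_L2, Real.sq_sqrt hε]

theorem eq_of_sameRay_toLp {E : Type*} [AddCommGroup E] [Module ℝ E] {x y : E} {c : ℝ}
    (hc : c ≠ 0) (h : SameRay ℝ (WithLp.toLp 2 (x, c)) (WithLp.toLp 2 (y, c))) : x = y := by
  have toLp_ne_zero (z : E) : WithLp.toLp 2 (z, c) ≠ 0 := fun hz => hc (congrArg WithLp.snd hz)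
  obtain ⟨r, r', hr, -, hrr'⟩ := h.exists_pos (toLp_ne_zero x) (toLp_ne_zero y)
  obtain rfl : r = r' := mul_right_cancel₀ hc (congrArg WithLp.snd hrr')
  exact smul_right_injective E hr.ne' (congrArg WithLp.fst hrr')

variable {E : Type*} [NormedAddCommGroup E] [InnerProductSpace ℝ E]

theorem strictConvexOn_sqrt_norm_sq_add {ε : ℝ} (hε : 0 < ε) :
    StrictConvexOn ℝ Set.univ fun x : E => √(‖x‖ ^ 2 + ε) := by
  refine ⟨convex_univ, fun x _ y _ hxy α β hα hβ hαβ => ?_⟩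
  simp only [sqrt_norm_sq_add_eq_norm_toLp hε.le]
  set X := WithLp.toLp 2 (x, √ε)
  set Y := WithLp.toLp 2 (y, √ε)
  have hcombo : WithLp.toLp 2 (α • x + β • y, √ε) = α • X + β • Y := by
    rw [← WithLp.toLp_smul, ← WithLp.toLp_smul, ← WithLp.toLp_add, Prod.smul_mk, Prod.smul_mk,
      Prod.mk_add_mk, ← add_smul, hαβ, one_smul]
  have hray : ¬SameRay ℝ (α • X) (β • Y) := fun h =>
    hxy <| eq_of_sameRay_toLp (Real.sqrt_pos.2 hε).ne' <| by
      simpa only [inv_smul_smul₀ hα.ne', inv_smul_smul₀ hβ.ne'] using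
        (h.pos_smul_left (inv_pos.2 hα)).pos_smul_right (inv_pos.2 hβ)
  calc ‖WithLp.toLp 2 (α • x + β • y, √ε)‖ = ‖α • X + β • Y‖ := by rw [hcombo]
    _ < ‖α • X‖ + ‖β • Y‖ := norm_add_lt_of_not_sameRay hray
    _ = α • ‖X‖ + β • ‖Y‖ := by
        rw [norm_smul_of_nonneg hα.le, norm_smul_of_nonneg hβ.le, smul_eq_mul, smul_eq_mul]

theorem strictConvexOn_norm_sq_add_rpow {ε p : ℝ} (hε : 0 < ε) (hp : 1 ≤ p) :
    StrictConvexOn ℝ Set.univ fun x : E => (‖x‖ ^ 2 + ε) ^ (p / 2) := by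
  refine (strictConvexOn_rpow_comp hp (strictConvexOn_sqrt_norm_sq_add hε)
    fun x _ => Real.sqrt_nonneg (‖x‖ ^ 2 + ε)).congr fun x _ => ?_
  beta_reduce
  rw [Real.sqrt_eq_rpow, ← Real.rpow_mul (by positivity), one_div_mul_eq_div]

end SmoothedNorm

theorem norm_starProjection_sub_le {𝕜 E : Type*} [RCLike 𝕜] [NormedAddCommGroup E]
    [InnerProductSpace 𝕜 E] (V : Submodule 𝕜 E) [V.HasOrthogonalProjection] (x : E) {v : E}
    (hv : v ∈ V) : ‖V.starProjection x - v‖ ≤ ‖x - v‖ := by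
  simpa only [map_sub, Submodule.starProjection_eq_self_iff.2 hv] using
    V.norm_starProjection_apply_le (x - v)

/-- The weighted sum of the `p`-th powers of the smoothed distances `√(‖x - a j‖² + ε)` from `x`
to the centres `a j`; the square root is absorbed into the exponent `p / 2`. -/
noncomputable def smoothedPowerCost {ι E : Type*} [Fintype ι] [NormedAddCommGroup E]
    (a : ι → E) (w : ι → ℝ) (ε p : ℝ) (x : E) : ℝ :=
  ∑ j, w j * (‖x - a j‖ ^ 2 + ε) ^ (p / 2)

namespace smoothedPowerCost

variable {ι E : Type*} [Fintype ι] [NormedAddCommGroup E] {w : ι → ℝ} {ε p : ℝ}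

theorem continuous (a : ι → E) (w : ι → ℝ) (ε : ℝ) (hp : 0 ≤ p) :
    Continuous (smoothedPowerCost a w ε p) :=
  continuous_finsetSum _ fun _ _ => continuous_const.mul <|
    Continuous.rpow_const (by fun_prop) fun _ => Or.inr (by positivity)

theorem tendsto_cobounded_atTop [Nonempty ι] (a : ι → E) (hw : ∀ j, 0 < w j) (hε : 0 ≤ ε)
    (hp : 0 < p) : Tendsto (smoothedPowerCost a w ε p) (Bornology.cobounded E) atTop := by
  obtain ⟨i⟩ := ‹Nonempty ι›
  have hnorm : Tendsto (fun x => ‖x - a i‖) (Bornology.cobounded E) atTop := by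
    simpa only [dist_eq_norm] using Metric.tendsto_dist_right_cobounded_atTop (a i)
  have hterm : Tendsto (fun x => w i * (‖x - a i‖ ^ 2 + ε) ^ (p / 2))
      (Bornology.cobounded E) atTop :=
    ((tendsto_rpow_atTop (half_pos hp)).comp <| tendsto_atTop_add_const_right _ ε <|
      (tendsto_pow_atTop two_ne_zero).comp hnorm).const_mul_atTop (hw i)
  refine tendsto_atTop_mono (fun x => ?_) hterm
  refine Finset.single_le_sum (f := fun j => w j * (‖x - a j‖ ^ 2 + ε) ^ (p / 2))
    (fun j _ => ?_) (Finset.mem_univ i)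
  exact mul_nonneg (hw j).le (by positivity)

theorem exists_forall_le_of_properSpace [Nonempty ι] [ProperSpace E] (a : ι → E)
    (hw : ∀ j, 0 < w j) (hε : 0 ≤ ε) (hp : 0 < p) :
    ∃ x₀, ∀ x, smoothedPowerCost a w ε p x₀ ≤ smoothedPowerCost a w ε p x :=
  (continuous a w ε hp.le).exists_forall_le <|
    Metric.cobounded_eq_cocompact (α := E) ▸ tendsto_cobounded_atTop a hw hε hp

variable [InnerProductSpace ℝ E]

theorem starProjection_le {a : ι → E} (hw : ∀ j, 0 ≤ w j) (hε : 0 ≤ ε) (hp : 0 ≤ p)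
    (V : Submodule ℝ E) [V.HasOrthogonalProjection] (ha : ∀ j, a j ∈ V) (x : E) :
    smoothedPowerCost a w ε p (V.starProjection x) ≤ smoothedPowerCost a w ε p x := by
  unfold smoothedPowerCost
  gcongr with j
  · exact hw j
  · exact norm_starProjection_sub_le V x (ha j)

theorem exists_forall_le [Nonempty ι] (a : ι → E) (hw : ∀ j, 0 < w j) (hε : 0 ≤ ε) (hp : 0 < p) :
    ∃ x₀, ∀ x, smoothedPowerCost a w ε p x₀ ≤ smoothedPowerCost a w ε p x := by
  let V := Submodule.span ℝ (Set.range a)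
  have : FiniteDimensional ℝ V := FiniteDimensional.span_of_finite ℝ (Set.finite_range a)
  have : ProperSpace V := FiniteDimensional.proper_real V
  have ha (j : ι) : a j ∈ V := Submodule.subset_span (Set.mem_range_self j)
  obtain ⟨v₀, hv₀⟩ := exists_forall_le_of_properSpace (fun j => (⟨a j, ha j⟩ : V)) hw hε hp
  refine ⟨v₀, fun x => ?_⟩
  calc smoothedPowerCost a w ε p v₀ ≤ smoothedPowerCost a w ε p (V.starProjection x) :=
        hv₀ (V.orthogonalProjectionOnto x)
    _ ≤ smoothedPowerCost a w ε p x := starProjection_le (fun j => (hw j).le) hε hp.le V ha x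

theorem strictConvexOn [Nonempty ι] (a : ι → E) (hw : ∀ j, 0 < w j) (hε : 0 < ε) (hp : 1 ≤ p) :
    StrictConvexOn ℝ Set.univ (smoothedPowerCost a w ε p) := by
  have hterm (j : ι) :
      StrictConvexOn ℝ Set.univ fun x => w j * (‖x - a j‖ ^ 2 + ε) ^ (p / 2) := by
    have htranslate := (strictConvexOn_norm_sq_add_rpow hε hp).translate_left (-a j)
    simpa only [Set.preimage_univ, Function.comp_apply, ← sub_eq_add_neg] using
      strictConvexOn_const_mul (hw j) htranslate
  refine (strictConvexOn_sum Finset.univ_nonempty fun j _ => hterm j).congr fun x _ => ?_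
  simp only [smoothedPowerCost, Finset.sum_apply]

end smoothedPowerCost

theorem stmt_4_general {ι E : Type*} [Fintype ι] [Nonempty ι] [NormedAddCommGroup E]
    [InnerProductSpace ℝ E] (a : ι → E) {w : ι → ℝ} (hw : ∀ j, 0 < w j) {ε : ℝ} (hε : 0 < ε)
    {p : ℝ} (hp : 1 ≤ p) :
    ∃! x₀, ∀ x, smoothedPowerCost a w ε p x₀ ≤ smoothedPowerCost a w ε p x := by
  obtain ⟨x₀, hx₀⟩ := smoothedPowerCost.exists_forall_le a hw hε.le (by linarith : 0 < p)
  refine ⟨x₀, hx₀, fun y hy => ?_⟩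
  exact (smoothedPowerCost.strictConvexOn a hw hε hp).eq_of_isMinOn (fun x _ => hy x)
    (fun x _ => hx₀ x) (Set.mem_univ y) (Set.mem_univ x₀)

theorem stmt_4
    (d n : ℕ) (hd : 1 ≤ d) (hn : 1 ≤ n)
    (a : Fin n → EuclideanSpace ℝ (Fin d))
    (w : Fin n → ℝ) (hw : ∀ j, 0 < w j)
    (ε : ℝ) (hε : 0 < ε)
    (p : ℝ) (hp0 : 0 < p) (hp2 : p ≤ 2)
    (Φ : EuclideanSpace ℝ (Fin d) → ℝ)
    (hΦ : ∀ x, Φ x = ∑ j, w j * (‖x - a j‖ ^ 2 + ε) ^ (p / 2))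
    (hp1 : 1 ≤ p) :
    ∃! xstar : EuclideanSpace ℝ (Fin d), ∀ x, Φ xstar ≤ Φ x := by
  have : Nonempty (Fin n) := ⟨⟨0, hn⟩⟩
  simpa only [smoothedPowerCost, hΦ] using stmt_4_general a hw hε hp1
end

section
/- The IRLS iterates produce a relaxation sequence: for every t ≥ 0, Φ(x^{(t+1)}) ≤ Φ(x^{(t)}). -/
open scoped ContDiff RealInnerProductSpace
open Filter

/-!
Iteratively reweighted least squares is a majorize-minimize scheme. Since `v ↦ v ^ (p / 2)` is
concave, replacing each summand of the cost by its tangent at the current iterate `x` gives a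
majorant that agrees with the cost at `x` and is, up to a constant, `p / 2` times the weighted sum
of squared distances `∑ μⱼ ‖y - aⱼ‖²`. The next iterate is the center of mass for the weights
`μⱼ`, which minimizes this quadratic.
-/

theorem rpow_le_rpow_add_mul_rpow_sub_one_mul_sub {q u v : ℝ} (hq₀ : 0 ≤ q) (hq₁ : q ≤ 1)
    (hu : 0 < u) (hv : 0 ≤ v) : v ^ q ≤ u ^ q + q * u ^ (q - 1) * (v - u) := by
  have bernoulli : (v / u) ^ q ≤ 1 + q * (v / u - 1) := by
    have hvu : -1 ≤ v / u - 1 := by linarith [div_nonneg hv hu.le]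
    simpa using rpow_one_add_le_one_add_mul_self hvu hq₀ hq₁
  calc v ^ q = u ^ q * (v / u) ^ q := by
        rw [← Real.mul_rpow hu.le (div_nonneg hv hu.le), mul_div_cancel₀ v hu.ne']
    _ ≤ u ^ q * (1 + q * (v / u - 1)) := by gcongr
    _ = u ^ q + q * u ^ (q - 1) * (v - u) := by
        rw [Real.rpow_sub_one hu.ne']
        field_simp

section CenterMass

variable {ι E : Type*} {s : Finset ι} {z : ι → E}

theorem sum_smul_centerMass_sub_eq_zero {𝕜 : Type*} [Field 𝕜] [LinearOrder 𝕜]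
    [IsOrderedAddMonoid 𝕜] [AddCommGroup E] [Module 𝕜 E] {w : ι → 𝕜} (hw : ∀ i ∈ s, 0 ≤ w i) :
    ∑ i ∈ s, w i • (s.centerMass w z - z i) = 0 := by
  by_cases hsum : ∑ i ∈ s, w i = 0
  · have hzero := (Finset.sum_eq_zero_iff_of_nonneg hw).mp hsum
    exact Finset.sum_eq_zero fun i hi ↦ by rw [hzero i hi, zero_smul]
  · simp only [smul_sub, Finset.sum_sub_distrib, ← Finset.sum_smul]
    rw [Finset.centerMass, smul_inv_smul₀ hsum, sub_self]

variable [SeminormedAddCommGroup E] [InnerProductSpace ℝ E] {w : ι → ℝ}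

theorem sum_mul_norm_sub_sq_of_sum_smul_sub_eq_zero {m : E}
    (hm : ∑ i ∈ s, w i • (m - z i) = 0) (x : E) :
    ∑ i ∈ s, w i * ‖x - z i‖ ^ 2 =
      ∑ i ∈ s, w i * ‖m - z i‖ ^ 2 + (∑ i ∈ s, w i) * ‖x - m‖ ^ 2 := by
  have expand (i : ι) : w i * ‖x - z i‖ ^ 2 =
      w i * ‖m - z i‖ ^ 2 + w i * ‖x - m‖ ^ 2 + 2 * ⟪x - m, w i • (m - z i)⟫ := by
    rw [← sub_add_sub_cancel x m (z i), norm_add_sq_real, real_inner_smul_right]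
    ring
  simp only [expand, Finset.sum_add_distrib, ← Finset.mul_sum, ← Finset.sum_mul, ← inner_sum, hm,
    inner_zero_right, mul_zero, add_zero]

theorem sum_mul_norm_centerMass_sub_sq_le (hw : ∀ i ∈ s, 0 ≤ w i) (x : E) :
    ∑ i ∈ s, w i * ‖s.centerMass w z - z i‖ ^ 2 ≤ ∑ i ∈ s, w i * ‖x - z i‖ ^ 2 := by
  rw [sum_mul_norm_sub_sq_of_sum_smul_sub_eq_zero (sum_smul_centerMass_sub_eq_zero hw) x]
  exact le_add_of_nonneg_right (mul_nonneg (Finset.sum_nonneg hw) (sq_nonneg _))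

end CenterMass

section IRLS

variable {ι E : Type*} [SeminormedAddCommGroup E]

/-- The smoothed cost `Φ(x) = ∑ⱼ wⱼ (‖x - aⱼ‖² + ε) ^ (p / 2)` that the iteratively reweighted
least squares (IRLS) iteration decreases. -/
noncomputable def irlsCost (s : Finset ι) (w : ι → ℝ) (a : ι → E) (ε p : ℝ) (x : E) : ℝ :=
  ∑ j ∈ s, w j * (‖x - a j‖ ^ 2 + ε) ^ (p / 2)

/-- The IRLS weight `μⱼ` at the iterate `x`. It is the derivative of `v ↦ wⱼ (v + ε) ^ (p / 2)`
at `v = ‖x - aⱼ‖²` without the factor `p / 2`, which does not affect centers of mass.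
If `ε = 0`, `p < 2` and `x = aⱼ`, the power has the junk value `0`. -/
noncomputable def irlsWeight (w : ι → ℝ) (a : ι → E) (ε p : ℝ) (x : E) (j : ι) : ℝ :=
  w j * (‖x - a j‖ ^ 2 + ε) ^ (p / 2 - 1)

/-- The IRLS iteration map `x⁽ᵗ⁾ ↦ x⁽ᵗ⁺¹⁾`: the center of mass of the points `aⱼ` for the weights
`μⱼ` at `x`. It is `0` if these weights sum to `0`. -/
noncomputable def irlsStep [Module ℝ E] (s : Finset ι) (w : ι → ℝ) (a : ι → E) (ε p : ℝ)
    (x : E) : E :=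
  s.centerMass (irlsWeight w a ε p x) a

variable {s : Finset ι} {w : ι → ℝ} {a : ι → E} {ε p : ℝ} {x : E}

theorem irlsWeight_nonneg {j : ι} (hw : 0 ≤ w j) (hε : 0 ≤ ε) : 0 ≤ irlsWeight w a ε p x j :=
  mul_nonneg hw (by positivity)

theorem irlsCost_le_add_sum_irlsWeight_mul_sub (hw : ∀ j ∈ s, 0 ≤ w j) (hε : 0 ≤ ε)
    (hp₀ : 0 ≤ p) (hp₂ : p ≤ 2) (hx : ∀ j ∈ s, 0 < ‖x - a j‖ ^ 2 + ε) (y : E) :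
    irlsCost s w a ε p y ≤ irlsCost s w a ε p x +
      p / 2 * ∑ j ∈ s, irlsWeight w a ε p x j * (‖y - a j‖ ^ 2 - ‖x - a j‖ ^ 2) := by
  simp only [irlsCost, irlsWeight, Finset.mul_sum, ← Finset.sum_add_distrib]
  refine Finset.sum_le_sum fun j hj ↦ ?_
  have tangent := rpow_le_rpow_add_mul_rpow_sub_one_mul_sub (q := p / 2)
    (v := ‖y - a j‖ ^ 2 + ε) (by linarith) (by linarith) (hx j hj) (by positivity)
  exact (mul_le_mul_of_nonneg_left tangent (hw j hj)).trans_eq (by ring)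

theorem stmt_10_general [InnerProductSpace ℝ E]
    (hw : ∀ j ∈ s, 0 ≤ w j) (hε : 0 ≤ ε) (hp₀ : 0 ≤ p) (hp₂ : p ≤ 2)
    (hx : ∀ j ∈ s, 0 < ‖x - a j‖ ^ 2 + ε) :
    irlsCost s w a ε p (irlsStep s w a ε p x) ≤ irlsCost s w a ε p x := by
  have majorize := irlsCost_le_add_sum_irlsWeight_mul_sub hw hε hp₀ hp₂ hx (irlsStep s w a ε p x)
  have minimize : ∑ j ∈ s, irlsWeight w a ε p x j *
      (‖irlsStep s w a ε p x - a j‖ ^ 2 - ‖x - a j‖ ^ 2) ≤ 0 := by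
    simp only [mul_sub, Finset.sum_sub_distrib, sub_nonpos]
    exact sum_mul_norm_centerMass_sub_sq_le (fun j hj ↦ irlsWeight_nonneg (hw j hj) hε) x
  exact majorize.trans <|
    add_le_of_nonpos_right (mul_nonpos_of_nonneg_of_nonpos (by positivity) minimize)

end IRLS

theorem stmt_10
    (d n : ℕ) (hd : 1 ≤ d) (hn : 1 ≤ n)
    (a : Fin n → EuclideanSpace ℝ (Fin d))
    (w : Fin n → ℝ) (hw : ∀ j, 0 < w j)
    (ε : ℝ) (hε : 0 < ε)
    (p : ℝ) (hp0 : 0 < p) (hp2 : p ≤ 2)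
    (Φ : EuclideanSpace ℝ (Fin d) → ℝ)
    (hΦ : ∀ x, Φ x = ∑ j, w j * (‖x - a j‖ ^ 2 + ε) ^ (p / 2))
    (x : ℕ → EuclideanSpace ℝ (Fin d))
    (hx : ∀ t, x (t + 1) =
      (∑ j, w j * (‖x t - a j‖ ^ 2 + ε) ^ (p / 2 - 1))⁻¹ •
        ∑ j, (w j * (‖x t - a j‖ ^ 2 + ε) ^ (p / 2 - 1)) • a j) :
    ∀ t, Φ (x (t + 1)) ≤ Φ (x t) := by
  intro t
  rw [hΦ, hΦ, hx]
  exact stmt_10_general (fun j _ ↦ (hw j).le) hε.le hp0.le hp2 fun _ _ ↦ by positivity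
end

section
/- Suppose 0 < p ≤ 2, x* ∈ ℝ^d is a stationary point of Φ with all IRLS iterates contained in a closed ball B_r(x*) of radius r around x*, and x* is the only stationary point of Φ in B_r(x*). Then the IRLS iterates (x^{(t)}) converge to x*. -/
open scoped ContDiff RealInnerProductSpace
open Filter

/-!
Put `φ u = (u + ε) ^ (p / 2 - 1)`, which for `p ≤ 2` is positive and antitone on `[0, ∞)`, so that
its primitive `ρ` is concave there. Replacing every `ρ (‖z - a j‖ ^ 2)` by its tangent line at the
current iterate gives a quadratic majorant of `F z = ∑ j, w j * ρ (‖z - a j‖ ^ 2)`, and the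
reweighted mean is exactly the minimizer of that majorant. Hence `F` decreases strictly along every
step that moves, and every cluster point of the iterates is a fixed point of the step. A fixed point
is stationary for `Φ`, because `Φ` and `p / 2 * F` differ by a constant. In a compact set with a
single stationary point this leaves only one possible cluster point.
-/

open Set Function
open scoped Topology

theorem isFixedPt_of_mapClusterPt_of_apply_lt {X α : Type*} [TopologicalSpace X]
    [TopologicalSpace α] [LinearOrder α] [OrderClosedTopology α] {T : X → X} {f : X → α}
    {x : ℕ → X} {z : X} (hT : ContinuousAt T z) (hfz : ContinuousAt f z)
    (hfTz : ContinuousAt f (T z)) (hlt : ∀ y, T y ≠ y → f (T y) < f y)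
    (hx : ∀ t, x (t + 1) = T (x t)) (hz : MapClusterPt z atTop x) : IsFixedPt T z := by
  have hanti : Antitone (f ∘ x) := antitone_nat_of_succ_le fun t => by
    rcases eq_or_ne (T (x t)) (x t) with h | h
    · simp only [comp_apply, hx, h, le_refl]
    · simpa only [comp_apply, hx] using (hlt _ h).le
  have hle (t : ℕ) : f z ≤ f (x t) :=
    isClosed_Iic.mem_of_mapClusterPt (hz.continuousAt_comp hfz)
      ((eventually_ge_atTop t).mono fun _ hs => hanti hs)
  have hle' : f z ≤ f (T z) :=
    isClosed_Ici.mem_of_mapClusterPt (hz.continuousAt_comp (f := f ∘ T) (hfTz.comp hT))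
      (Eventually.of_forall fun t => by simpa only [comp_apply, hx] using! hle (t + 1))
  by_contra hne
  exact (hlt z hne).not_ge hle'

theorem intervalIntegral_le_mul_sub_of_antitoneOn {φ : ℝ → ℝ} {u v : ℝ}
    (hφ : AntitoneOn φ (uIcc v u)) : ∫ t in v..u, φ t ≤ φ v * (u - v) := by
  have hint : IntervalIntegrable φ MeasureTheory.volume v u := hφ.intervalIntegrable
  rcases le_total v u with hvu | huv
  · have h := intervalIntegral.integral_mono_on hvu hint intervalIntegrable_const fun t ht =>
      hφ left_mem_uIcc (Icc_subset_uIcc ht) ht.1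
    rwa [intervalIntegral.integral_const, smul_eq_mul, mul_comm] at h
  · have h := intervalIntegral.integral_mono_on huv intervalIntegrable_const hint.symm fun t ht =>
      hφ (Icc_subset_uIcc' ht) left_mem_uIcc ht.2
    rw [intervalIntegral.integral_const, smul_eq_mul] at h
    rw [intervalIntegral.integral_symm]
    linarith

theorem continuousOn_primitive_Ici {F : Type*} [NormedAddCommGroup F] [NormedSpace ℝ F]
    {φ : ℝ → F} {b : ℝ} (hφ : ContinuousOn φ (Ici b)) :
    ContinuousOn (fun u => ∫ t in b..u, φ t) (Ici b) := by
  intro u (hu : b ≤ u)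
  have hint : IntervalIntegrable φ MeasureTheory.volume b (u + 1) :=
    (hφ.mono fun t ht => (le_inf le_rfl (by linarith)).trans ht.1).intervalIntegrable
  have hcont := intervalIntegral.continuousOn_primitive_interval' hint left_mem_uIcc
  rw [uIcc_of_le (by linarith)] at hcont
  refine (hcont u ⟨hu, by linarith⟩).mono_of_mem_nhdsWithin ?_
  exact inter_mem_nhdsWithin _ (Iic_mem_nhds (lt_add_one u))

section CenterMass

variable {ι 𝕜 E : Type*} {s : Finset ι}

theorem sum_smul_sub_eq_sum_smul_sub_centerMass [Field 𝕜] [AddCommGroup E] [Module 𝕜 E]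
    {m : ι → 𝕜} (hm : ∑ j ∈ s, m j ≠ 0) (a : ι → E) (z : E) :
    ∑ j ∈ s, m j • (z - a j) = (∑ j ∈ s, m j) • (z - s.centerMass m a) := by
  simp only [Finset.centerMass, smul_sub, smul_inv_smul₀ hm, Finset.sum_sub_distrib,
    Finset.sum_smul]

theorem sum_mul_norm_sub_sq_eq_centerMass [NormedAddCommGroup E] [InnerProductSpace ℝ E]
    {m : ι → ℝ} (hm : ∑ j ∈ s, m j ≠ 0) (a : ι → E) (z : E) :
    ∑ j ∈ s, m j * ‖z - a j‖ ^ 2 = ∑ j ∈ s, m j * ‖s.centerMass m a - a j‖ ^ 2 +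
      (∑ j ∈ s, m j) * ‖z - s.centerMass m a‖ ^ 2 := by
  set c := s.centerMass m a with hc
  have hcross : ∑ j ∈ s, m j * ⟪z - c, c - a j⟫ = 0 := by
    simp only [← real_inner_smul_right, ← inner_sum]
    rw [sum_smul_sub_eq_sum_smul_sub_centerMass hm, ← hc, sub_self, smul_zero, inner_zero_right]
  have hterm (j : ι) : m j * ‖z - a j‖ ^ 2 =
      m j * ‖c - a j‖ ^ 2 + m j * ‖z - c‖ ^ 2 + 2 * (m j * ⟪z - c, c - a j⟫) := by
    rw [← sub_add_sub_cancel z c (a j), norm_add_sq_real]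
    ring
  simp only [hterm, Finset.sum_add_distrib, ← Finset.mul_sum, hcross, ← Finset.sum_mul]
  ring

end CenterMass

namespace IRLS

variable {ι E : Type*} [NormedAddCommGroup E]

/-- The weight that iteratively reweighted least squares attaches to the data point `a j` at the
current iterate `z`. The weight function `φ` is evaluated at the *squared* distance. -/
def weight (a : ι → E) (w : ι → ℝ) (φ : ℝ → ℝ) (z : E) (j : ι) : ℝ :=
  w j * φ (‖z - a j‖ ^ 2)

variable {a : ι → E} {w : ι → ℝ} {φ ρ : ℝ → ℝ}

theorem continuous_weight (hφ : ContinuousOn φ (Ici 0)) (j : ι) :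
    Continuous fun z => weight a w φ z j :=
  continuous_const.mul (hφ.comp_continuous (by fun_prop) fun z => sq_nonneg ‖z - a j‖)

variable [Fintype ι]

theorem sum_weight_pos [Nonempty ι] (hw : ∀ j, 0 < w j) (hφ : ∀ u, 0 ≤ u → 0 < φ u) (z : E) :
    0 < ∑ j, weight a w φ z j :=
  Finset.sum_pos (fun j _ => mul_pos (hw j) (hφ _ (sq_nonneg _))) Finset.univ_nonempty

/-- The weighted total loss at `z` with respect to the data points `a j`. As in `weight`, the loss
function `ρ` is evaluated at the *squared* distance. -/
def objective (a : ι → E) (w : ι → ℝ) (ρ : ℝ → ℝ) (z : E) : ℝ :=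
  ∑ j, w j * ρ (‖z - a j‖ ^ 2)

theorem continuous_objective (hρ : ContinuousOn ρ (Ici 0)) : Continuous (objective a w ρ) :=
  continuous_finsetSum _ fun j _ => continuous_weight hρ j

variable [InnerProductSpace ℝ E]

theorem hasGradientAt_objective [CompleteSpace E] {ρ' : ℝ → ℝ} {z : E}
    (hρ : ∀ j, HasDerivAt ρ (ρ' (‖z - a j‖ ^ 2)) (‖z - a j‖ ^ 2)) :
    HasGradientAt (objective a w ρ) ((2 : ℝ) • ∑ j, weight a w ρ' z j • (z - a j)) z := by
  rw [hasGradientAt_iff_hasFDerivAt]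
  have hterm (j : ι) := ((hρ j).comp_hasFDerivAt z
    ((hasFDerivAt_id z).sub_const (a j)).norm_sq).const_mul (w j)
  refine (HasFDerivAt.fun_sum fun j _ => hterm j).congr_fderiv ?_
  ext y
  simp only [sum_apply, smul_apply, ContinuousLinearMap.comp_apply, ContinuousLinearMap.id_apply,
    innerSL_apply_apply, InnerProductSpace.toDual_apply_apply, real_inner_smul_left, sum_inner,
    smul_eq_mul, nsmul_eq_mul, Finset.mul_sum, weight, id_eq]
  refine Finset.sum_congr rfl fun j _ => ?_
  push_cast
  ring

/-- One step of iteratively reweighted least squares: the mean of the data points with the weights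
computed at the current iterate `z`. -/
noncomputable def step (a : ι → E) (w : ι → ℝ) (φ : ℝ → ℝ) (z : E) : E :=
  Finset.univ.centerMass (weight a w φ z) a

section Descent

variable [Nonempty ι]

theorem continuous_step (hw : ∀ j, 0 < w j) (hφpos : ∀ u, 0 ≤ u → 0 < φ u)
    (hφ : ContinuousOn φ (Ici 0)) : Continuous (step a w φ) := by
  refine Continuous.smul (Continuous.inv₀ ?_ fun z => (sum_weight_pos hw hφpos z).ne') ?_
  · exact continuous_finsetSum _ fun j _ => continuous_weight hφ j
  · exact continuous_finsetSum _ fun j _ => (continuous_weight hφ j).smul continuous_const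

theorem sum_weight_smul_sub_eq_zero_of_isFixedPt (hw : ∀ j, 0 < w j)
    (hφpos : ∀ u, 0 ≤ u → 0 < φ u) {z : E} (hz : IsFixedPt (step a w φ) z) :
    ∑ j, weight a w φ z j • (z - a j) = 0 := by
  rw [sum_smul_sub_eq_sum_smul_sub_centerMass (sum_weight_pos hw hφpos z).ne', ← step, hz.eq,
    sub_self, smul_zero]

theorem objective_step_add_le (hw : ∀ j, 0 < w j) (hφpos : ∀ u, 0 ≤ u → 0 < φ u)
    (hρ : ∀ u v, 0 ≤ u → 0 ≤ v → ρ u ≤ ρ v + φ v * (u - v)) (z : E) :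
    objective a w ρ (step a w φ z) + (∑ j, weight a w φ z j) * ‖z - step a w φ z‖ ^ 2 ≤
      objective a w ρ z := by
  have hmajorant : objective a w ρ (step a w φ z) ≤ objective a w ρ z +
      (∑ j, weight a w φ z j * ‖step a w φ z - a j‖ ^ 2 -
        ∑ j, weight a w φ z j * ‖z - a j‖ ^ 2) := by
    simp only [objective, weight, ← Finset.sum_sub_distrib, ← Finset.sum_add_distrib]
    refine Finset.sum_le_sum fun j _ => ?_
    linarith [mul_le_mul_of_nonneg_left
      (hρ _ _ (sq_nonneg ‖step a w φ z - a j‖) (sq_nonneg ‖z - a j‖)) (hw j).le]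
  have hmean := sum_mul_norm_sub_sq_eq_centerMass (sum_weight_pos (a := a) hw hφpos z).ne' a z
  rw [← step] at hmean
  linarith

theorem objective_step_lt (hw : ∀ j, 0 < w j) (hφpos : ∀ u, 0 ≤ u → 0 < φ u)
    (hρ : ∀ u v, 0 ≤ u → 0 ≤ v → ρ u ≤ ρ v + φ v * (u - v)) {z : E} (hz : step a w φ z ≠ z) :
    objective a w ρ (step a w φ z) < objective a w ρ z := by
  have hdist : 0 < ‖z - step a w φ z‖ := norm_sub_pos_iff.2 hz.symm
  have hdecrease : 0 < (∑ j, weight a w φ z j) * ‖z - step a w φ z‖ ^ 2 :=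
    mul_pos (sum_weight_pos hw hφpos z) (pow_pos hdist 2)
  linarith [objective_step_add_le (a := a) hw hφpos hρ z]

theorem isFixedPt_step_of_mapClusterPt (hw : ∀ j, 0 < w j) (hφpos : ∀ u, 0 ≤ u → 0 < φ u)
    (hφ : ContinuousOn φ (Ici 0)) (hanti : AntitoneOn φ (Ici 0)) {x : ℕ → E}
    (hx : ∀ t, x (t + 1) = step a w φ (x t)) {z : E} (hz : MapClusterPt z atTop x) :
    IsFixedPt (step a w φ) z := by
  have htangent (u v : ℝ) (hu : 0 ≤ u) (hv : 0 ≤ v) :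
      ∫ t in 0..u, φ t ≤ (∫ t in 0..v, φ t) + φ v * (u - v) := by
    have hsub {b c : ℝ} (hb : 0 ≤ b) (hc : 0 ≤ c) : AntitoneOn φ (uIcc b c) :=
      hanti.mono fun t ht => (le_inf hb hc).trans ht.1
    rw [← intervalIntegral.integral_add_adjacent_intervals (hsub le_rfl hv).intervalIntegrable
      (hsub hv hu).intervalIntegrable]
    gcongr
    exact intervalIntegral_le_mul_sub_of_antitoneOn (hsub hv hu)
  have hcont : Continuous (objective a w fun u => ∫ t in 0..u, φ t) :=
    continuous_objective (continuousOn_primitive_Ici hφ)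
  exact isFixedPt_of_mapClusterPt_of_apply_lt (continuous_step hw hφpos hφ).continuousAt
    hcont.continuousAt hcont.continuousAt
    (fun _ hy => objective_step_lt hw hφpos htangent hy) hx hz

end Descent

section Power

variable {ε p : ℝ}

theorem hasGradientAt_objective_rpow [CompleteSpace E] (hε : 0 < ε) (z : E) :
    HasGradientAt (objective a w fun u => (u + ε) ^ (p / 2))
      (p • ∑ j, weight a w (fun u => (u + ε) ^ (p / 2 - 1)) z j • (z - a j)) z := by
  have hderiv (j : ι) : HasDerivAt (fun u : ℝ => (u + ε) ^ (p / 2))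
      (p / 2 * (‖z - a j‖ ^ 2 + ε) ^ (p / 2 - 1)) (‖z - a j‖ ^ 2) := by
    have hne : ‖z - a j‖ ^ 2 + ε ≠ 0 := by positivity
    simpa only [one_mul] using ((hasDerivAt_id' _).add_const ε).rpow_const (Or.inl hne)
  convert hasGradientAt_objective (ρ' := fun u => p / 2 * (u + ε) ^ (p / 2 - 1)) hderiv using 1
  simp only [weight, Finset.smul_sum, smul_smul]
  refine Finset.sum_congr rfl fun j _ => ?_
  congr 1
  ring

theorem gradient_objective_rpow_eq_zero_of_mapClusterPt [CompleteSpace E] [Nonempty ι]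
    (hw : ∀ j, 0 < w j) (hε : 0 < ε) (hp : p ≤ 2) {x : ℕ → E}
    (hx : ∀ t, x (t + 1) = step a w (fun u => (u + ε) ^ (p / 2 - 1)) (x t)) {z : E}
    (hz : MapClusterPt z atTop x) :
    gradient (objective a w fun u => (u + ε) ^ (p / 2)) z = 0 := by
  have hshift {u : ℝ} (hu : 0 ≤ u) : 0 < u + ε := add_pos_of_nonneg_of_pos hu hε
  have hpos (u : ℝ) (hu : 0 ≤ u) : 0 < (u + ε) ^ (p / 2 - 1) := Real.rpow_pos_of_pos (hshift hu) _
  have hcont : ContinuousOn (fun u => (u + ε) ^ (p / 2 - 1)) (Ici 0) :=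
    ContinuousOn.rpow_const (by fun_prop) fun u hu => Or.inl (hshift hu).ne'
  have hanti : AntitoneOn (fun u => (u + ε) ^ (p / 2 - 1)) (Ici 0) := fun u hu v _ huv =>
    Real.rpow_le_rpow_of_nonpos (hshift hu) (by gcongr) (by linarith)
  have hfixed := isFixedPt_step_of_mapClusterPt hw hpos hcont hanti hx hz
  rw [(hasGradientAt_objective_rpow hε z).gradient,
    sum_weight_smul_sub_eq_zero_of_isFixedPt hw hpos hfixed, smul_zero]

end Power

end IRLS

theorem stmt_17_general {ι E : Type*} [Fintype ι] [Nonempty ι] [NormedAddCommGroup E]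
    [InnerProductSpace ℝ E] [CompleteSpace E] {a : ι → E} {w : ι → ℝ} (hw : ∀ j, 0 < w j)
    {ε p : ℝ} (hε : 0 < ε) (hp : p ≤ 2) {Φ : E → ℝ}
    (hΦ : ∀ x, Φ x = ∑ j, w j * (‖x - a j‖ ^ 2 + ε) ^ (p / 2)) {x : ℕ → E}
    (hx : ∀ t, x (t + 1) =
      (∑ j, w j * (‖x t - a j‖ ^ 2 + ε) ^ (p / 2 - 1))⁻¹ •
        ∑ j, (w j * (‖x t - a j‖ ^ 2 + ε) ^ (p / 2 - 1)) • a j)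
    {K : Set E} (hK : IsCompact K) (hxK : ∀ᶠ t in atTop, x t ∈ K) {xstar : E}
    (honly : ∀ z ∈ K, gradient Φ z = 0 → z = xstar) : Tendsto x atTop (𝓝 xstar) := by
  obtain rfl : Φ = IRLS.objective a w fun u => (u + ε) ^ (p / 2) := funext hΦ
  exact hK.tendsto_nhds_of_unique_mapClusterPt hxK fun z hzK hz =>
    honly z hzK (IRLS.gradient_objective_rpow_eq_zero_of_mapClusterPt hw hε hp hx hz)

theorem stmt_17
    (d n : ℕ) (hd : 1 ≤ d) (hn : 1 ≤ n)
    (a : Fin n → EuclideanSpace ℝ (Fin d))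
    (w : Fin n → ℝ) (hw : ∀ j, 0 < w j)
    (ε : ℝ) (hε : 0 < ε)
    (p : ℝ) (hp0 : 0 < p) (hp2 : p ≤ 2)
    (Φ : EuclideanSpace ℝ (Fin d) → ℝ)
    (hΦ : ∀ x, Φ x = ∑ j, w j * (‖x - a j‖ ^ 2 + ε) ^ (p / 2))
    (x : ℕ → EuclideanSpace ℝ (Fin d))
    (hx : ∀ t, x (t + 1) =
      (∑ j, w j * (‖x t - a j‖ ^ 2 + ε) ^ (p / 2 - 1))⁻¹ •
        ∑ j, (w j * (‖x t - a j‖ ^ 2 + ε) ^ (p / 2 - 1)) • a j)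
    (xstar : EuclideanSpace ℝ (Fin d)) (r : ℝ)
    (hstat : gradient Φ xstar = 0)
    (hball : ∀ t, x t ∈ Metric.closedBall xstar r)
    (honly : ∀ z ∈ Metric.closedBall xstar r, gradient Φ z = 0 → z = xstar) :
    Tendsto x atTop (nhds xstar) := by
  have : Nonempty (Fin n) := ⟨⟨0, hn⟩⟩
  exact stmt_17_general hw hε hp2 hΦ hx (isCompact_closedBall xstar r) (.of_forall hball) honly
end
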